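/- For every ε > 0 there exists C_ε > 0 with the following property. For all dyadic N, N₁, N₂, N₃ ≥ 1, all m ∈ ℤ, and every fixed n₁ ∈ ℤ², the number of triples (n, n₂, n₃) with (n, n₁, n₂, n₃) ∈ S^{𝐍,(m)} is at most C_ε · min( N₃² (min(N, N₂))^ε, (N N₂)^{1+ε}, (N N₃)^{1+ε}, (N₂ N₃)^{1+ε} ), uniformly in n₁ and m. -/

import Mathlib

/-- Euclidean norm of a lattice point in `ℤ²`. -/
noncomputable def znorm (n : ℤ × ℤ) : ℝ := Real.sqrt ((n.1 : ℝ) ^ 2 + (n.2 : ℝ) ^ 2)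

/-- Squared Euclidean norm `|n|²` of `n ∈ ℤ²`, as an integer. -/
def nsq (n : ℤ × ℤ) : ℤ := n.1 ^ 2 + n.2 ^ 2

/-- `φ(n̄) = |n|² − |n₁|² + |n₂|² − |n₃|²`. -/
def phiFn (n n₁ n₂ n₃ : ℤ × ℤ) : ℤ := nsq n - nsq n₁ + nsq n₂ - nsq n₃

/-- `N` is a dyadic number: `N = 2^k` for some integer `k ≥ 0`. -/
def IsDyadic (N : ℝ) : Prop := ∃ k : ℕ, N = 2 ^ k

/-- `|n| ∼ N`: for dyadic `N ≥ 2` this means `N/2 < |n| ≤ N`; for `N = 1` it means `|n| ≤ 1`. -/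
def simDyadic (N : ℝ) (n : ℤ × ℤ) : Prop :=
  (N = 1 ∧ znorm n ≤ 1) ∨ (N ≠ 1 ∧ N / 2 < znorm n ∧ znorm n ≤ N)

/-- Membership in the set `S^{𝐍,(m)}`. -/
def SMem (N N₁ N₂ N₃ : ℝ) (m : ℤ) (n n₁ n₂ n₃ : ℤ × ℤ) : Prop :=
  n = n₁ - n₂ + n₃ ∧ n ≠ n₁ ∧ n ≠ n₃ ∧ phiFn n n₁ n₂ n₃ = m ∧
    simDyadic N n ∧ simDyadic N₁ n₁ ∧ simDyadic N₂ n₂ ∧ simDyadic N₃ n₃ 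


lemma aux_small (ε : ℝ) (hε : 0 < ε) (x : ℝ) (hx : 2 ≤ x) (k : ℕ) :
    ((k : ℝ) + 1) ≤ (1 + 1 / (ε * Real.log 2)) * (x ^ ε) ^ k := by
  have hl : 0 < Real.log 2 := Real.log_pos (by norm_num)
  have hp : 0 < ε * Real.log 2 := by positivity
  have h1 : 1 + ε * Real.log 2 ≤ x ^ ε := by
    have h2 : (2:ℝ) ^ ε ≤ x ^ ε := Real.rpow_le_rpow (by norm_num) hx hε.le
    have h3 : 1 + ε * Real.log 2 ≤ (2:ℝ) ^ ε := by
      rw [Real.rpow_def_of_pos (by norm_num)]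
      have := Real.add_one_le_exp (Real.log 2 * ε)
      linarith
    linarith
  have h4 : 1 + k * (ε * Real.log 2) ≤ (x ^ ε) ^ k := by
    have := one_add_mul_le_pow (a := ε * Real.log 2) (by linarith) k
    exact this.trans (pow_le_pow_left₀ (by positivity) h1 k)
  have h5 : ((k : ℝ) + 1) ≤ (1 + 1 / (ε * Real.log 2)) * (1 + k * (ε * Real.log 2)) := by
    set q := ε * Real.log 2
    have : (1 + 1 / q) * (1 + k * q) = (k + 1) + (k * q + 1 / q) := by
      field_simp
      ring
    rw [this]
    have : 0 ≤ k * q + 1 / q := by positivity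
    linarith
  exact h5.trans (mul_le_mul_of_nonneg_left h4 (by positivity))

/-- Gaussian integers in a box. -/
noncomputable def gbox (M : ℕ) : Finset GaussianInt :=
  (Finset.Icc (-(M:ℤ)) M ×ˢ Finset.Icc (-(M:ℤ)) M).image (fun p => (⟨p.1, p.2⟩ : GaussianInt))

lemma mem_gbox (M : ℕ) (w : GaussianInt) (h : w.norm ≤ M) : w ∈ gbox M := by
  unfold gbox
  rw [Finset.mem_image]
  refine ⟨(w.re, w.im), ?_, rfl⟩
  rw [Zsqrtd.norm_def] at h
  simp only [Finset.mem_product, Finset.mem_Icc]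
  refine ⟨⟨?_, ?_⟩, ?_, ?_⟩ <;> nlinarith [sq_nonneg w.re, sq_nonneg w.im]

lemma gauss_divisors (ε : ℝ) (hε : 0 < ε) : ∃ C : ℝ, 1 ≤ C ∧ ∀ z : GaussianInt, z ≠ 0 →
    ∀ S : Finset GaussianInt, (∀ w ∈ S, w ∣ z) → (S.card : ℝ) ≤ C * (z.norm.natAbs : ℝ) ^ ε := by
  classical
  let _ : StrongNormalizationMonoid GaussianInt := UniqueFactorizationMonoid.strongNormalizationMonoid
  set c : ℝ := 1 + 1 / (ε * Real.log 2) with hc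
  have hl : 0 < Real.log 2 := Real.log_pos (by norm_num)
  have hc1 : 1 ≤ c := by
    have : 0 ≤ 1 / (ε * Real.log 2) := by positivity
    linarith
  obtain ⟨X, hX⟩ := exists_nat_gt ((2:ℝ) ^ (1/ε))
  have hone : (1:ℝ) ≤ ((gbox 1).card : ℝ) := by
    have : 1 ∈ gbox 1 := mem_gbox 1 1 (by simp)
    exact_mod_cast Finset.card_pos.mpr ⟨_, this⟩
  refine ⟨(gbox 1).card * c ^ (gbox X).card, ?_, ?_⟩
  · have := one_le_pow₀ hc1 (n := (gbox X).card)
    nlinarith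
  intro z hz S hS
  set s := UniqueFactorizationMonoid.normalizedFactors z with hs
  have hcard : S.card ≤ (Finset.Iic s).card * (gbox 1).card := by
    rw [← Finset.card_product]
    refine (Finset.card_le_card (t := ((Finset.Iic s) ×ˢ (gbox 1)).image (fun p => p.1.prod * p.2)) ?_).trans Finset.card_image_le
    intro w hw
    have hwz := hS w hw
    have hw0 : w ≠ 0 := fun h => hz (by simpa [h] using hwz)
    obtain ⟨u, hu⟩ := UniqueFactorizationMonoid.prod_normalizedFactors hw0
    rw [Finset.mem_image]
    refine ⟨(UniqueFactorizationMonoid.normalizedFactors w, (u : GaussianInt)), ?_, hu⟩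
    rw [Finset.mem_product, Finset.mem_Iic]
    refine ⟨(UniqueFactorizationMonoid.dvd_iff_normalizedFactors_le_normalizedFactors hw0 hz).1 hwz, ?_⟩
    apply mem_gbox
    have := (Zsqrtd.norm_eq_one_iff' (by norm_num : (-1:ℤ) ≤ 0) (u : GaussianInt)).2 u.isUnit
    simp [this]
  have hnorm : z.norm.natAbs = ∏ p ∈ s.toFinset, (p.norm.natAbs) ^ (s.count p) := by
    have h1 : s.prod.norm = z.norm := Zsqrtd.norm_eq_of_associated (by norm_num) (UniqueFactorizationMonoid.prod_normalizedFactors hz)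
    rw [← h1, Finset.prod_multiset_count]
    have h2 := map_prod (Int.natAbsHom.toMonoidHom.comp (Zsqrtd.normMonoidHom (d := -1))) (fun p => p ^ (s.count p)) s.toFinset
    simp only [map_pow] at h2
    exact h2
  have hprod : ((∏ p ∈ s.toFinset, (s.count p + 1) : ℕ) : ℝ) ≤ c ^ (gbox X).card * (z.norm.natAbs : ℝ) ^ ε := by
    have e1 : (z.norm.natAbs : ℝ) ^ ε = ∏ p ∈ s.toFinset, ((p.norm.natAbs : ℝ) ^ ε) ^ (s.count p) := by
      rw [hnorm]
      push_cast
      rw [← Real.finsetProd_rpow _ _ (fun i _ => by positivity)]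
      refine Finset.prod_congr rfl fun p _ => ?_
      rw [← Real.rpow_natCast, ← Real.rpow_natCast, ← Real.rpow_mul (by positivity), ← Real.rpow_mul (by positivity), mul_comm]
    have e2 : ∏ p ∈ s.toFinset, (if p ∈ gbox X then c else 1) ≤ c ^ (gbox X).card := by
      rw [Finset.prod_ite]
      simp only [Finset.prod_const, one_pow, mul_one]
      apply pow_le_pow_right₀ hc1
      apply Finset.card_le_card
      intro p hp
      exact (Finset.mem_filter.1 hp).2
    push_cast
    calc _ ≤ ∏ p ∈ s.toFinset, ((if p ∈ gbox X then c else 1) * ((p.norm.natAbs : ℝ) ^ ε) ^ (s.count p)) := by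
          refine Finset.prod_le_prod (fun i _ => by positivity) fun p hp => ?_
          have hpp : Prime p := UniqueFactorizationMonoid.prime_of_normalized_factor p (Multiset.mem_toFinset.1 hp)
          have h2 : 2 ≤ p.norm.natAbs := by
            have h0 : p.norm ≠ 0 := by
              intro h
              exact hpp.ne_zero ((Zsqrtd.norm_eq_zero_iff (by norm_num) p).1 h)
            have h1 : p.norm.natAbs ≠ 1 := fun h => hpp.not_isUnit (Zsqrtd.norm_eq_one_iff.1 h)
            omega
          have h2' : (2:ℝ) ≤ (p.norm.natAbs : ℝ) := by exact_mod_cast h2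
          split_ifs with hm
          · exact aux_small ε hε _ h2' _
          · have h3 : (X:ℝ) ≤ (p.norm.natAbs : ℝ) := by
              by_contra hcon
              push Not at hcon
              apply hm
              apply mem_gbox
              have : p.norm.natAbs < X := by exact_mod_cast hcon
              omega
            have h4 : (2:ℝ) ≤ (p.norm.natAbs : ℝ) ^ ε := by
              have := Real.rpow_le_rpow (by positivity) (hX.le.trans h3) hε.le
              rwa [← Real.rpow_mul (by norm_num), one_div, inv_mul_cancel₀ hε.ne', Real.rpow_one] at this
            rw [one_mul]
            have h5 := pow_le_pow_left₀ (by norm_num) h4 (s.count p)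
            have h6 : s.count p + 1 ≤ 2 ^ (s.count p) := Nat.lt_two_pow_self
            have h7 : ((s.count p : ℝ) + 1) ≤ 2 ^ (s.count p) := by exact_mod_cast h6
            linarith
      _ = (∏ p ∈ s.toFinset, (if p ∈ gbox X then c else 1)) * (z.norm.natAbs : ℝ) ^ ε := by
          rw [Finset.prod_mul_distrib, e1]
      _ ≤ _ := mul_le_mul_of_nonneg_right e2 (by positivity)
  have : (S.card : ℝ) ≤ ((Finset.Iic s).card : ℝ) * (gbox 1).card := by exact_mod_cast hcard
  rw [Multiset.card_Iic] at this
  calc _ ≤ _ := this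
    _ ≤ (c ^ (gbox X).card * (z.norm.natAbs : ℝ) ^ ε) * (gbox 1).card := by gcongr
    _ = _ := by ring

lemma hyp_three (K x1 x2 x3 y1 y2 y3 : ℤ) (hK : K ≠ 0) (h1 : x1 * y1 = K) (h2 : x2 * y2 = K)
    (h3 : x3 * y3 = K) :
    ((x1 - x2) * (y2 - y3) - (x2 - x3) * (y1 - y2)) ^ 2 * K =
      - ((x1 - x2) * (x2 - x3) * (x3 - x1) * ((y1 - y2) * (y2 - y3) * (y3 - y1))) ∨
    ((x1 - x2) * (y2 - y3) - (x2 - x3) * (y1 - y2)) ^ 2 * K =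
      ((x1 - x2) * (x2 - x3) * (x3 - x1) * ((y1 - y2) * (y2 - y3) * (y3 - y1))) := by
  have n1 : (x1 : ℚ) ≠ 0 := by
    intro h; have : x1 = 0 := by exact_mod_cast h
    exact hK (by rw [← h1, this, zero_mul])
  have n2 : (x2 : ℚ) ≠ 0 := by
    intro h; have : x2 = 0 := by exact_mod_cast h
    exact hK (by rw [← h2, this, zero_mul])
  have n3 : (x3 : ℚ) ≠ 0 := by
    intro h; have : x3 = 0 := by exact_mod_cast h
    exact hK (by rw [← h3, this, zero_mul])
  have e1 : (y1 : ℚ) = K / x1 := by rw [eq_div_iff n1, ← h1]; push_cast; ring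
  have e2 : (y2 : ℚ) = K / x2 := by rw [eq_div_iff n2, ← h2]; push_cast; ring
  have e3 : (y3 : ℚ) = K / x3 := by rw [eq_div_iff n3, ← h3]; push_cast; ring
  left
  have : (((x1 - x2) * (y2 - y3) - (x2 - x3) * (y1 - y2)) ^ 2 * K : ℚ) =
      - ((x1 - x2) * (x2 - x3) * (x3 - x1) * ((y1 - y2) * (y2 - y3) * (y3 - y1))) := by
    rw [e1, e2, e3]
    field_simp
    ring
  exact_mod_cast this

lemma abs_sub_le_two (x y c A : ℤ) (hx : |x - c| ≤ A) (hy : |y - c| ≤ A) : |x - y| ≤ 2 * A := by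
  rw [abs_le] at *
  constructor <;> linarith [hx.1, hx.2, hy.1, hy.2]

lemma hyp_bound (ε : ℝ) (hε : 0 < ε) : ∃ C : ℝ, 1 ≤ C ∧ ∀ A B : ℕ, 1 ≤ A → 1 ≤ B →
    ∀ K c c' : ℤ, K ≠ 0 → ∀ S : Finset (ℤ × ℤ),
    (∀ p ∈ S, p.1 * p.2 = K ∧ |p.1 - c| ≤ A ∧ |p.2 - c'| ≤ B) →
    (S.card : ℝ) ≤ C * ((A : ℝ) * B) ^ ε := by
  obtain ⟨C, hC, h⟩ := gauss_divisors (ε / 6) (by positivity)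
  have h4 : (1:ℝ) ≤ 4 ^ ε := Real.one_le_rpow (by norm_num) hε.le
  refine ⟨2 * C * 4 ^ ε, by nlinarith, ?_⟩
  intro A B hA hB K c c' hK S hS
  have hAB : (1:ℝ) ≤ (A:ℝ) * B := by exact_mod_cast Nat.mul_pos hA hB
  have hABe : (1:ℝ) ≤ ((A:ℝ) * B) ^ ε := Real.one_le_rpow hAB hε.le
  by_cases hbig : |K| ≤ (4 * A * B) ^ 3
  · have hinj : Set.InjOn (fun p : ℤ × ℤ => ((p.1 : ℤ) : GaussianInt)) S := by
      intro p hp q hq hpq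
      have e : p.1 = q.1 := by simpa using hpq
      have h1 := (hS p hp).1
      have h2 := (hS q hq).1
      have h3 : p.1 ≠ 0 := by intro h; rw [h, zero_mul] at h1; exact hK h1.symm
      refine Prod.ext e ?_
      apply mul_left_cancel₀ h3
      rw [h1, e, h2]
    classical
    have := h (K : GaussianInt) (by exact_mod_cast hK) (S.image (fun p : ℤ × ℤ => ((p.1 : ℤ) : GaussianInt))) (by
      intro w hw
      obtain ⟨p, hp, rfl⟩ := Finset.mem_image.1 hw
      refine ⟨((p.2 : ℤ) : GaussianInt), ?_⟩
      rw [← (hS p hp).1]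
      push_cast
      rfl)
    rw [Finset.card_image_of_injOn hinj] at this
    have hn : ((K : GaussianInt).norm.natAbs : ℝ) ≤ (4 * ((A:ℝ) * B)) ^ (6:ℝ) := by
      rw [Zsqrtd.norm_intCast, Int.natAbs_mul]
      have hk : (K.natAbs : ℤ) ≤ (4 * A * B) ^ 3 := by
        rw [Int.natCast_natAbs]; exact hbig
      have hk' : (K.natAbs : ℝ) ≤ (4 * A * B) ^ 3 := by exact_mod_cast hk
      push_cast
      calc (K.natAbs : ℝ) * K.natAbs ≤ (4 * A * B) ^ 3 * (4 * A * B) ^ 3 := by gcongr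
        _ = (4 * ((A:ℝ) * B)) ^ (6:ℝ) := by norm_cast; ring
    have hn2 : ((K : GaussianInt).norm.natAbs : ℝ) ^ (ε / 6) ≤ 4 ^ ε * ((A:ℝ) * B) ^ ε := by
      calc _ ≤ ((4 * ((A:ℝ) * B)) ^ (6:ℝ)) ^ (ε / 6) :=
            Real.rpow_le_rpow (by positivity) hn (by positivity)
        _ = (4 * ((A:ℝ) * B)) ^ ε := by
            rw [← Real.rpow_mul (by positivity)]; congr 1; ring
        _ = _ := Real.mul_rpow (by norm_num) (by positivity)
    calc (S.card : ℝ) ≤ _ := this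
      _ ≤ C * (4 ^ ε * ((A:ℝ) * B) ^ ε) := by gcongr
      _ ≤ 2 * C * 4 ^ ε * ((A:ℝ) * B) ^ ε := by
        have : 0 ≤ C * (4 ^ ε * ((A:ℝ) * B) ^ ε) := by positivity
        linarith
  · have hc2 : S.card ≤ 2 := by
      by_contra hcon
      push Not at hcon
      apply hbig
      obtain ⟨p, q, r, hp, hq, hr, hpq, hpr, hqr⟩ := Finset.two_lt_card_iff.1 hcon
      obtain ⟨p1, p2, p3⟩ := hS p hp
      obtain ⟨q1, q2, q3⟩ := hS q hq
      obtain ⟨r1, r2, r3⟩ := hS r hr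
      have key : ∀ a b : ℤ × ℤ, a.1 * a.2 = K → b.1 * b.2 = K → a ≠ b → a.1 - b.1 ≠ 0 ∧ a.2 - b.2 ≠ 0 := by
        intro a b ha hb hab
        constructor
        · intro h0
          have e : a.1 = b.1 := by linarith
          have h3 : a.1 ≠ 0 := by intro h; rw [h, zero_mul] at ha; exact hK ha.symm
          exact hab (Prod.ext e (mul_left_cancel₀ h3 (by rw [ha, e, hb])))
        · intro h0
          have e : a.2 = b.2 := by linarith
          have h3 : a.2 ≠ 0 := by intro h; rw [h, mul_zero] at ha; exact hK ha.symm
          exact hab (Prod.ext (mul_right_cancel₀ h3 (by rw [ha, e, hb])) e)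
      have k1 := key p q p1 q1 hpq
      have k2 := key q r q1 r1 hqr
      have k3 := key r p r1 p1 hpr.symm
      have hne : ((p.1 - q.1) * (q.1 - r.1) * (r.1 - p.1) * ((p.2 - q.2) * (q.2 - r.2) * (r.2 - p.2))) ≠ 0 :=
        mul_ne_zero (mul_ne_zero (mul_ne_zero k1.1 k2.1) k3.1) (mul_ne_zero (mul_ne_zero k1.2 k2.2) k3.2)
      have hle : |(p.1 - q.1) * (q.1 - r.1) * (r.1 - p.1) * ((p.2 - q.2) * (q.2 - r.2) * (r.2 - p.2))| ≤ (4 * A * B) ^ 3 := by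
        simp only [abs_mul]
        have a1 := abs_sub_le_two _ _ _ _ p2 q2
        have a2 := abs_sub_le_two _ _ _ _ q2 r2
        have a3 := abs_sub_le_two _ _ _ _ r2 p2
        have b1 := abs_sub_le_two _ _ _ _ p3 q3
        have b2 := abs_sub_le_two _ _ _ _ q3 r3
        have b3 := abs_sub_le_two _ _ _ _ r3 p3
        calc _ ≤ (2 * (A:ℤ)) * (2 * A) * (2 * A) * ((2 * B) * (2 * B) * (2 * B)) := by gcongr
          _ = _ := by ring
      have hid : |((p.1 - q.1) * (q.2 - r.2) - (q.1 - r.1) * (p.2 - q.2)) ^ 2 * K| =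
          |(p.1 - q.1) * (q.1 - r.1) * (r.1 - p.1) * ((p.2 - q.2) * (q.2 - r.2) * (r.2 - p.2))| := by
        rcases hyp_three K p.1 q.1 r.1 p.2 q.2 r.2 hK p1 q1 r1 with h | h
        · rw [h, abs_neg]
        · rw [h]
      refine le_trans ?_ hle
      rw [← hid, abs_mul]
      rw [← abs_pos, ← hid, abs_mul] at hne
      have : 0 < |((p.1 - q.1) * (q.2 - r.2) - (q.1 - r.1) * (p.2 - q.2)) ^ 2| :=
        pos_of_mul_pos_left hne (abs_nonneg _)
      nlinarith [abs_nonneg K]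
    have hc2' : (S.card : ℝ) ≤ 2 := by exact_mod_cast hc2
    have : 1 ≤ C * 4 ^ ε := by nlinarith
    have : 1 ≤ C * 4 ^ ε * ((A:ℝ) * B) ^ ε := by nlinarith
    linarith

lemma circ_three (K x1 x2 y1 y2 z1 z2 : ℤ) (hx : x1 ^ 2 + x2 ^ 2 = K) (hy : y1 ^ 2 + y2 ^ 2 = K)
    (hz : z1 ^ 2 + z2 ^ 2 = K) :
    4 * ((y1 - x1) * (z2 - x2) - (y2 - x2) * (z1 - x1)) ^ 2 * K =
      ((y1 - x1) ^ 2 + (y2 - x2) ^ 2) * ((z1 - x1) ^ 2 + (z2 - x2) ^ 2) *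
        ((z1 - y1) ^ 2 + (z2 - y2) ^ 2) := by
  obtain ⟨u1, rfl⟩ : ∃ u, y1 = x1 + u := ⟨y1 - x1, by ring⟩
  obtain ⟨u2, rfl⟩ : ∃ u, y2 = x2 + u := ⟨y2 - x2, by ring⟩
  obtain ⟨v1, rfl⟩ : ∃ u, z1 = x1 + u := ⟨z1 - x1, by ring⟩
  obtain ⟨v2, rfl⟩ : ∃ u, z2 = x2 + u := ⟨z2 - x2, by ring⟩
  have hU : u1 ^ 2 + u2 ^ 2 = -2 * (x1 * u1 + x2 * u2) := by linarith
  have hV : v1 ^ 2 + v2 ^ 2 = -2 * (x1 * v1 + x2 * v2) := by linarith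
  have e1 : 2 * (u1 * v2 - u2 * v1) * x1 = (v1 ^ 2 + v2 ^ 2) * u2 - (u1 ^ 2 + u2 ^ 2) * v2 := by
    rw [hU, hV]; ring
  have e2 : 2 * (u1 * v2 - u2 * v1) * x2 = (u1 ^ 2 + u2 ^ 2) * v1 - (v1 ^ 2 + v2 ^ 2) * u1 := by
    rw [hU, hV]; ring
  have e3 : 4 * (u1 * v2 - u2 * v1) ^ 2 * K = (2 * (u1 * v2 - u2 * v1) * x1) ^ 2 + (2 * (u1 * v2 - u2 * v1) * x2) ^ 2 := by
    rw [← hx]; ring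
  rw [e1, e2] at e3
  have : 4 * ((x1 + u1 - x1) * (x2 + v2 - x2) - (x2 + u2 - x2) * (x1 + v1 - x1)) ^ 2 * K = 4 * (u1 * v2 - u2 * v1) ^ 2 * K := by ring
  rw [this, e3]
  ring

lemma circ_bound (ε : ℝ) (hε : 0 < ε) : ∃ C : ℝ, 1 ≤ C ∧ ∀ A : ℕ, 1 ≤ A →
    ∀ (K : ℤ) (s : ℤ × ℤ), ∀ S : Finset (ℤ × ℤ),
    (∀ p ∈ S, (2 * p.1 - s.1) ^ 2 + (2 * p.2 - s.2) ^ 2 = K ∧ |p.1| ≤ A ∧ |p.2| ≤ A) →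
    (S.card : ℝ) ≤ C * (A : ℝ) ^ ε := by
  obtain ⟨C, hC, h⟩ := gauss_divisors (ε / 12) (by positivity)
  have h4 : (1:ℝ) ≤ 8 ^ ε := Real.one_le_rpow (by norm_num) hε.le
  refine ⟨2 * C * 8 ^ ε, by nlinarith, ?_⟩
  intro A hA K s S hS
  have hAe : (1:ℝ) ≤ (A:ℝ) ^ ε := Real.one_le_rpow (by exact_mod_cast hA) hε.le
  have hpos : ∀ p q : ℤ × ℤ, p ≠ q →
      0 < ((2 * q.1 - s.1) - (2 * p.1 - s.1)) ^ 2 + ((2 * q.2 - s.2) - (2 * p.2 - s.2)) ^ 2 := by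
    intro p q hpq
    by_contra hcon
    have a1 := sq_nonneg ((2 * q.1 - s.1) - (2 * p.1 - s.1))
    have a2 := sq_nonneg ((2 * q.2 - s.2) - (2 * p.2 - s.2))
    have b1 : ((2 * q.1 - s.1) - (2 * p.1 - s.1)) = 0 := by
      apply pow_eq_zero_iff (two_ne_zero) |>.1; linarith
    have b2 : ((2 * q.2 - s.2) - (2 * p.2 - s.2)) = 0 := by
      apply pow_eq_zero_iff (two_ne_zero) |>.1; linarith
    exact hpq (Prod.ext (by linarith) (by linarith))
  by_cases hbig : K ≠ 0 ∧ K ≤ (8 * A) ^ 6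
  · obtain ⟨hK, hbig⟩ := hbig
    have hinj : Set.InjOn (fun p : ℤ × ℤ => (⟨2 * p.1 - s.1, 2 * p.2 - s.2⟩ : GaussianInt)) S := by
      intro p hp q hq hpq
      have e1 := congrArg Zsqrtd.re hpq
      have e2 := congrArg Zsqrtd.im hpq
      simp only at e1 e2
      exact Prod.ext (by linarith) (by linarith)
    classical
    have hK0 : S.card = 0 ∨ 0 ≤ K := by
      rcases S.eq_empty_or_nonempty with rfl | ⟨p, hp⟩
      · left; rfl
      · right; rw [← (hS p hp).1]; positivity
    have hRHS : 0 ≤ 2 * C * 8 ^ ε * (A:ℝ) ^ ε := by positivity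
    rcases hK0 with hK0 | hK0
    · rw [hK0]; simpa using hRHS
    have := h (K : GaussianInt) (by exact_mod_cast hK) (S.image (fun p : ℤ × ℤ => (⟨2 * p.1 - s.1, 2 * p.2 - s.2⟩ : GaussianInt))) (by
      intro w hw
      obtain ⟨p, hp, rfl⟩ := Finset.mem_image.1 hw
      refine ⟨star (⟨2 * p.1 - s.1, 2 * p.2 - s.2⟩ : GaussianInt), ?_⟩
      rw [← (hS p hp).1, ← Zsqrtd.norm_eq_mul_conj, Zsqrtd.norm_def]
      congr 1
      ring)
    rw [Finset.card_image_of_injOn hinj] at this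
    have hn : ((K : GaussianInt).norm.natAbs : ℝ) ≤ (8 * (A:ℝ)) ^ (12:ℝ) := by
      rw [Zsqrtd.norm_intCast, Int.natAbs_mul]
      have hk : (K.natAbs : ℤ) ≤ (8 * A) ^ 6 := by
        rw [Int.natCast_natAbs, abs_of_nonneg hK0]; exact hbig
      have hk' : (K.natAbs : ℝ) ≤ (8 * A) ^ 6 := by exact_mod_cast hk
      push_cast
      calc (K.natAbs : ℝ) * K.natAbs ≤ (8 * A) ^ 6 * (8 * A) ^ 6 := by gcongr
        _ = (8 * (A:ℝ)) ^ (12:ℝ) := by norm_cast; ring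
    have hn2 : ((K : GaussianInt).norm.natAbs : ℝ) ^ (ε / 12) ≤ 8 ^ ε * (A:ℝ) ^ ε := by
      calc _ ≤ ((8 * (A:ℝ)) ^ (12:ℝ)) ^ (ε / 12) :=
            Real.rpow_le_rpow (by positivity) hn (by positivity)
        _ = (8 * (A:ℝ)) ^ ε := by
            rw [← Real.rpow_mul (by positivity)]; congr 1; ring
        _ = _ := Real.mul_rpow (by norm_num) (by positivity)
    calc (S.card : ℝ) ≤ _ := this
      _ ≤ C * (8 ^ ε * (A:ℝ) ^ ε) := by gcongr
      _ ≤ 2 * C * 8 ^ ε * (A:ℝ) ^ ε := by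
        have : 0 ≤ C * (8 ^ ε * (A:ℝ) ^ ε) := by positivity
        linarith
  · have hc2 : S.card ≤ 2 := by
      by_contra hcon
      push Not at hcon
      apply hbig
      obtain ⟨p, q, r, hp, hq, hr, hpq, hpr, hqr⟩ := Finset.two_lt_card_iff.1 hcon
      obtain ⟨p1, p2, p3⟩ := hS p hp
      obtain ⟨q1, q2, q3⟩ := hS q hq
      obtain ⟨r1, r2, r3⟩ := hS r hr
      have hid := circ_three K _ _ _ _ _ _ p1 q1 r1
      have k1 := hpos p q hpq
      have k2 := hpos p r hpr
      have k3 := hpos q r hqr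
      have hprod := mul_pos (mul_pos k1 k2) k3
      have hle : ∀ a b : ℤ × ℤ, |a.1| ≤ A → |a.2| ≤ A → |b.1| ≤ A → |b.2| ≤ A →
        ((2 * b.1 - s.1) - (2 * a.1 - s.1)) ^ 2 + ((2 * b.2 - s.2) - (2 * a.2 - s.2)) ^ 2 ≤ (8 * (A:ℤ)) ^ 2 := by
        intro a b ha1 ha2 hb1 hb2
        rw [abs_le] at *
        have e1 : ((2 * b.1 - s.1) - (2 * a.1 - s.1)) ^ 2 ≤ (4 * (A:ℤ)) ^ 2 := by
          apply sq_le_sq'  <;> linarith [ha1.1, ha1.2, hb1.1, hb1.2]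
        have e2 : ((2 * b.2 - s.2) - (2 * a.2 - s.2)) ^ 2 ≤ (4 * (A:ℤ)) ^ 2 := by
          apply sq_le_sq'  <;> linarith [ha2.1, ha2.2, hb2.1, hb2.2]
        have e3 : (4 * (A:ℤ)) ^ 2 + (4 * (A:ℤ)) ^ 2 ≤ (8 * (A:ℤ)) ^ 2 := by
          linarith only [sq_nonneg (A:ℤ)]
        exact (add_le_add e1 e2).trans e3
      have l1 := hle p q p2 p3 q2 q3
      have l2 := hle p r p2 p3 r2 r3
      have l3 := hle q r q2 q3 r2 r3
      have hb : (((2 * q.1 - s.1) - (2 * p.1 - s.1)) ^ 2 + ((2 * q.2 - s.2) - (2 * p.2 - s.2)) ^ 2) *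
        (((2 * r.1 - s.1) - (2 * p.1 - s.1)) ^ 2 + ((2 * r.2 - s.2) - (2 * p.2 - s.2)) ^ 2) *
        (((2 * r.1 - s.1) - (2 * q.1 - s.1)) ^ 2 + ((2 * r.2 - s.2) - (2 * q.2 - s.2)) ^ 2) ≤ (8 * (A:ℤ)) ^ 6 := by
        calc _ ≤ (8 * (A:ℤ)) ^ 2 * (8 * (A:ℤ)) ^ 2 * (8 * (A:ℤ)) ^ 2 := by gcongr
          _ = _ := by ring
      rw [← hid] at hprod hb
      have hK0 : 0 ≤ K := by rw [← p1]; positivity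
      constructor
      · rintro rfl; simp at hprod
      · have := pos_of_mul_pos_left hprod hK0
        exact (le_mul_of_one_le_left hK0 this).trans hb
    have hc2' : (S.card : ℝ) ≤ 2 := by exact_mod_cast hc2
    have : 1 ≤ C * 8 ^ ε := by nlinarith
    have : 1 ≤ C * 8 ^ ε * (A:ℝ) ^ ε := by nlinarith
    linarith

lemma card_fiber {α β : Type*} [DecidableEq β] (S : Finset α) (T : Finset β) (f : α → β)
    (hf : ∀ a ∈ S, f a ∈ T) (r : ℝ)
    (h : ∀ b ∈ T, ((S.filter (fun a => f a = b)).card : ℝ) ≤ r) : (S.card : ℝ) ≤ T.card * r := by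
  rw [Finset.card_eq_sum_card_fiberwise (t := T) (f := f) (fun a ha => hf a ha)]
  push_cast
  calc _ ≤ ∑ b ∈ T, r := Finset.sum_le_sum h
    _ = _ := by rw [Finset.sum_const, nsmul_eq_mul]

/-- The integer interval of radius `A` about `c`. -/
noncomputable def ival (c : ℤ) (A : ℕ) : Finset ℤ := Finset.Icc (c - A) (c + A)

lemma mem_ival (c x : ℤ) (A : ℕ) : x ∈ ival c A ↔ |x - c| ≤ A := by
  unfold ival
  rw [Finset.mem_Icc, abs_le]
  constructor <;> rintro ⟨h1, h2⟩ <;> constructor <;> linarith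

lemma card_ival (c : ℤ) (A : ℕ) (hA : 1 ≤ A) : ((ival c A).card : ℝ) ≤ 3 * A := by
  have : (ival c A).card ≤ 3 * A := by
    unfold ival
    rw [Int.card_Icc]
    omega
  exact_mod_cast this

lemma card_ival_prod (c c' : ℤ) (A B : ℕ) (hA : 1 ≤ A) (hB : 1 ≤ B) :
    ((ival c A ×ˢ ival c' B).card : ℝ) ≤ 9 * (A * B) := by
  rw [Finset.card_product]
  push_cast
  calc _ ≤ (3 * A : ℝ) * (3 * B) := by
        gcongr
        · exact card_ival c A hA
        · exact card_ival c' B hB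
    _ = _ := by ring

lemma bilin_bound (ε : ℝ) (hε : 0 < ε) : ∃ C : ℝ, 1 ≤ C ∧ ∀ A B : ℕ, 1 ≤ A → 1 ≤ B →
    ∀ (M : ℤ) (c c' : ℤ × ℤ) (t : ℤ), t = 0 ∨ t = 1 → ∀ S : Finset ((ℤ × ℤ) × (ℤ × ℤ)),
    (∀ q ∈ S, q.1.1 * q.2.1 + q.1.2 * q.2.2 = M ∧ q.1 ≠ 0 ∧ q.2 ≠ 0 ∧
      |q.1.1 - c.1| ≤ A ∧ |q.1.2 - c.2| ≤ A ∧
      |q.2.1 - t * q.1.1 - c'.1| ≤ B ∧ |q.2.2 - t * q.1.2 - c'.2| ≤ B) →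
    (S.card : ℝ) ≤ C * ((A : ℝ) * B) ^ (1 + ε) := by
  obtain ⟨C, hC, h⟩ := hyp_bound (ε / 2) (by positivity)
  have h2e : (1:ℝ) ≤ 2 ^ ε := Real.one_le_rpow (by norm_num) hε.le
  have hC2 : 1 ≤ C * 2 ^ ε := by nlinarith
  refine ⟨9 * (C * 2 ^ ε) + 6 * (C * 2 ^ ε) + 18, by linarith, ?_⟩
  intro A B hA hB M c c' t ht S hS
  have hA' : (1:ℝ) ≤ A := by exact_mod_cast hA
  have hB' : (1:ℝ) ≤ B := by exact_mod_cast hB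
  have hAB : (1:ℝ) ≤ (A:ℝ) * B := by nlinarith
  have hABe : (1:ℝ) ≤ ((A:ℝ) * B) ^ ε := Real.one_le_rpow hAB hε.le
  -- the hyperbola estimate in the form used below
  have hyp : ∀ K c c' : ℤ, K ≠ 0 → ∀ S : Finset (ℤ × ℤ),
      (∀ p ∈ S, p.1 * p.2 = K ∧ |p.1 - c| ≤ A ∧ |p.2 - t * p.1 - c'| ≤ B) →
      (S.card : ℝ) ≤ C * 2 ^ ε * ((A : ℝ) * B) ^ ε := by
    intro K c c' hK S hS
    have h1 := h A (A + B) hA (by omega) K c (c' + t * c) hK S (by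
      intro p hp
      obtain ⟨e1, e2, e3⟩ := hS p hp
      refine ⟨e1, e2, ?_⟩
      rw [abs_le] at *
      push_cast
      rcases ht with rfl | rfl
      · constructor <;> linarith [e2.1, e2.2, e3.1, e3.2]
      · constructor <;> linarith [e2.1, e2.2, e3.1, e3.2])
    have h2 : ((A:ℝ) * ((A + B : ℕ) : ℝ)) ≤ (2 * ((A:ℝ) * B)) ^ (2:ℝ) := by
      push_cast
      norm_cast
      have : A + B ≤ 2 * (A * B) := by nlinarith
      have h3 : A ≤ A * B := by nlinarith
      calc A * (A + B) ≤ (A * B) * (2 * (A * B)) := Nat.mul_le_mul h3 this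
        _ ≤ (2 * (A * B)) ^ 2 := by nlinarith [Nat.zero_le ((A * B) ^ 2)]
    have h3 : ((A:ℝ) * ((A + B : ℕ) : ℝ)) ^ (ε / 2) ≤ 2 ^ ε * ((A : ℝ) * B) ^ ε := by
      calc _ ≤ ((2 * ((A:ℝ) * B)) ^ (2:ℝ)) ^ (ε / 2) :=
            Real.rpow_le_rpow (by positivity) h2 (by positivity)
        _ = (2 * ((A:ℝ) * B)) ^ ε := by
            rw [← Real.rpow_mul (by positivity)]; congr 1; ring
        _ = _ := Real.mul_rpow (by norm_num) (by positivity)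
    calc _ ≤ _ := h1
      _ ≤ C * (2 ^ ε * ((A : ℝ) * B) ^ ε) := by gcongr
      _ = _ := by ring
  classical
  set D := C * 2 ^ ε with hD
  set P := ((A : ℝ) * B) ^ ε with hP
  have hsplit : ((A : ℝ) * B) ^ (1 + ε) = (A * B) * P := by
    rw [Real.rpow_add (by positivity), Real.rpow_one]
  set S1 := S.filter (fun q => q.1.2 * q.2.2 ≠ 0) with hS1
  set S2 := S.filter (fun q => q.1.2 * q.2.2 = 0 ∧ q.1.1 * q.2.1 ≠ 0) with hS2
  set S3 := S.filter (fun q => q.1.2 * q.2.2 = 0 ∧ q.1.1 * q.2.1 = 0) with hS3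
  have hcov : S.card ≤ S1.card + S2.card + S3.card := by
    refine (Finset.card_le_card (t := S1 ∪ S2 ∪ S3) ?_).trans
      ((Finset.card_union_le _ _).trans (Nat.add_le_add_right (Finset.card_union_le _ _) _))
    intro q hq
    simp only [hS1, hS2, hS3, Finset.mem_union, Finset.mem_filter]
    tauto
  have b1 : (S1.card : ℝ) ≤ 9 * (A * B) * (D * P) := by
    refine (card_fiber S1 (ival c.1 A ×ˢ ival c'.1 B) (fun q => (q.1.1, q.2.1 - t * q.1.1)) ?_ (D * P) ?_).trans ?_
    · intro q hq
      obtain ⟨_, _, _, e1, _, e2, _⟩ := hS q (Finset.mem_filter.1 hq).1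
      rw [Finset.mem_product, mem_ival, mem_ival]
      exact ⟨e1, e2⟩
    · intro b hb
      by_cases hK : M - b.1 * (b.2 + t * b.1) = 0
      · have : S1.filter (fun q => (q.1.1, q.2.1 - t * q.1.1) = b) = ∅ := by
          apply Finset.filter_eq_empty_iff.2
          rintro q hq rfl
          obtain ⟨hq, hq2⟩ := Finset.mem_filter.1 hq
          apply hq2
          rw [← (hS q hq).1] at hK
          simp only at hK
          linarith
        rw [this]
        simp only [Finset.card_empty, Nat.cast_zero]
        positivity
      · rw [← Finset.card_image_of_injOn (f := fun q : (ℤ × ℤ) × (ℤ × ℤ) => (q.1.2, q.2.2))]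
        · apply hyp (M - b.1 * (b.2 + t * b.1)) c.2 c'.2 hK
          intro p hp
          obtain ⟨q, hq, rfl⟩ := Finset.mem_image.1 hp
          obtain ⟨hq', rfl⟩ := Finset.mem_filter.1 hq
          obtain ⟨e0, _, _, _, e1, _, e2⟩ := hS q (Finset.mem_filter.1 hq').1
          refine ⟨?_, e1, e2⟩
          rw [← e0]
          simp only
          ring
        · intro q hq q' hq' hqq
          have f1 := (Finset.mem_filter.1 hq).2
          have f2 := (Finset.mem_filter.1 hq').2
          rw [← f2] at f1
          simp only [Prod.mk.injEq] at f1 hqq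
          obtain ⟨f3, f4⟩ := f1
          rw [f3] at f4
          exact Prod.ext (Prod.ext f3 hqq.1) (Prod.ext (by linarith) hqq.2)
    · have := card_ival_prod c.1 c'.1 A B hA hB
      gcongr
  have b2 : (S2.card : ℝ) ≤ (D * P) * (6 * (A * B)) := by
    by_cases hM : M = 0
    · have : S2 = ∅ := by
        apply Finset.filter_eq_empty_iff.2
        rintro q hq ⟨h1, h2⟩
        have := (hS q hq).1
        apply h2
        linarith
      rw [this]
      simp only [Finset.card_empty, Nat.cast_zero]
      positivity
    refine (card_fiber S2 (S2.image (fun q => (q.1.1, q.2.1))) (fun q => (q.1.1, q.2.1)) ?_ (6 * (A * B)) ?_).trans ?_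
    · intro q hq
      exact Finset.mem_image_of_mem _ hq
    · intro b hb
      rw [← Finset.card_image_of_injOn (f := fun q : (ℤ × ℤ) × (ℤ × ℤ) => (q.1.2, q.2.2))]
      · have hsub : (S2.filter (fun q => (q.1.1, q.2.1) = b)).image (fun q => (q.1.2, q.2.2)) ⊆
            ({0} ×ˢ ival c'.2 B) ∪ (ival c.2 A ×ˢ {0}) := by
          intro p hp
          obtain ⟨q, hq, rfl⟩ := Finset.mem_image.1 hp
          obtain ⟨hq, h0, _⟩ := Finset.mem_filter.1 (Finset.mem_filter.1 hq).1
          obtain ⟨_, _, _, _, e1, _, e2⟩ := hS q hq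
          simp only [Finset.mem_union, Finset.mem_product, Finset.mem_singleton, mem_ival]
          rcases mul_eq_zero.1 h0 with h0 | h0
          · left
            rw [h0, mul_zero, sub_zero] at e2
            exact ⟨h0, e2⟩
          · right
            exact ⟨e1, h0⟩
        have hcc := (Finset.card_le_card hsub).trans (Finset.card_union_le _ _)
        rw [Finset.card_product, Finset.card_product] at hcc
        simp only [Finset.card_singleton, one_mul, mul_one] at hcc
        have hcc' : (((S2.filter (fun q => (q.1.1, q.2.1) = b)).image (fun q => (q.1.2, q.2.2))).card : ℝ) ≤ (ival c'.2 B).card + (ival c.2 A).card := by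
          exact_mod_cast hcc
        have i1 := card_ival c'.2 B hB
        have i2 := card_ival c.2 A hA
        nlinarith
      · intro q hq q' hq' hqq
        have f1 := (Finset.mem_filter.1 hq).2
        have f2 := (Finset.mem_filter.1 hq').2
        rw [← f2] at f1
        simp only [Prod.mk.injEq] at f1 hqq
        exact Prod.ext (Prod.ext f1.1 hqq.1) (Prod.ext f1.2 hqq.2)
    · have := hyp M c.1 c'.1 hM (S2.image (fun q => (q.1.1, q.2.1))) (by
        intro p hp
        obtain ⟨q, hq, rfl⟩ := Finset.mem_image.1 hp
        obtain ⟨hq, h0, _⟩ := Finset.mem_filter.1 hq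
        obtain ⟨e0, _, _, e1, _, e2, _⟩ := hS q hq
        refine ⟨?_, e1, e2⟩
        simp only
        linarith)
      gcongr
  have b3 : (S3.card : ℝ) ≤ 18 * (A * B) := by
    have hsub : S3 ⊆ ((ival c.2 A ×ˢ ival c'.1 B).image (fun p => ((0, p.1), (p.2, 0)))) ∪
        ((ival c.1 A ×ˢ ival c'.2 B).image (fun p => ((p.1, 0), (0, p.2)))) := by
      rintro ⟨⟨a1, a2⟩, ⟨b1, b2⟩⟩ hq
      obtain ⟨hq, h2, h1⟩ := Finset.mem_filter.1 hq
      obtain ⟨_, ha, hb, e1, e2, e3, e4⟩ := hS _ hq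
      simp only [Finset.mem_union, Finset.mem_image, Finset.mem_product, mem_ival, ne_eq,
        Prod.mk_eq_zero] at *
      rcases mul_eq_zero.1 h1 with rfl | rfl
      · left
        rcases mul_eq_zero.1 h2 with rfl | rfl
        · simp at ha
        · exact ⟨(a2, b1), ⟨e2, by simpa using e3⟩, rfl⟩
      · right
        rcases mul_eq_zero.1 h2 with rfl | rfl
        · exact ⟨(a1, b2), ⟨e1, by simpa using e4⟩, rfl⟩
        · simp at hb
    have hcc := (Finset.card_le_card hsub).trans ((Finset.card_union_le _ _).trans
      (Nat.add_le_add Finset.card_image_le Finset.card_image_le))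
    have hcc' : (S3.card : ℝ) ≤ ((ival c.2 A ×ˢ ival c'.1 B).card : ℝ) + ((ival c.1 A ×ˢ ival c'.2 B).card : ℝ) := by
      exact_mod_cast hcc
    have i1 := card_ival_prod c.2 c'.1 A B hA hB
    have i2 := card_ival_prod c.1 c'.2 A B hA hB
    linarith
  have hcov' : (S.card : ℝ) ≤ S1.card + S2.card + S3.card := by exact_mod_cast hcov
  rw [hsplit]
  have : (A * B : ℝ) ≤ A * B * P := le_mul_of_one_le_right (by positivity) hABe
  calc (S.card : ℝ) ≤ 9 * (A * B) * (D * P) + (D * P) * (6 * (A * B)) + 18 * (A * B * P) := by linarith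
    _ = _ := by ring

lemma card_inj_bilin {C e : ℝ} {A B : ℕ} {α : Type*} [DecidableEq α] {M : ℤ} {c c' : ℤ × ℤ} {t : ℤ}
    (T : Finset α) (f : α → (ℤ × ℤ) × (ℤ × ℤ)) (hinj : Set.InjOn f T)
    (hb : ∀ S : Finset ((ℤ × ℤ) × (ℤ × ℤ)),
    (∀ q ∈ S, q.1.1 * q.2.1 + q.1.2 * q.2.2 = M ∧ q.1 ≠ 0 ∧ q.2 ≠ 0 ∧
      |q.1.1 - c.1| ≤ A ∧ |q.1.2 - c.2| ≤ A ∧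
      |q.2.1 - t * q.1.1 - c'.1| ≤ B ∧ |q.2.2 - t * q.1.2 - c'.2| ≤ B) →
    (S.card : ℝ) ≤ C * ((A : ℝ) * B) ^ (1 + e))
    (h : ∀ x ∈ T, (f x).1.1 * (f x).2.1 + (f x).1.2 * (f x).2.2 = M ∧ (f x).1 ≠ 0 ∧ (f x).2 ≠ 0 ∧
      |(f x).1.1 - c.1| ≤ A ∧ |(f x).1.2 - c.2| ≤ A ∧
      |(f x).2.1 - t * (f x).1.1 - c'.1| ≤ B ∧ |(f x).2.2 - t * (f x).1.2 - c'.2| ≤ B) :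
    (T.card : ℝ) ≤ C * ((A : ℝ) * B) ^ (1 + e) := by
  classical
  rw [← Finset.card_image_of_injOn hinj]
  apply hb
  intro q hq
  obtain ⟨x, hx, rfl⟩ := Finset.mem_image.1 hq
  exact h x hx

lemma sim_bound (A : ℕ) (n : ℤ × ℤ) (h : simDyadic (A : ℝ) n) : |n.1| ≤ A ∧ |n.2| ≤ A := by
  have hz : znorm n ≤ A := by
    rcases h with ⟨h1, h2⟩ | ⟨_, _, h2⟩
    · rw [h1]; exact h2
    · exact h2
  unfold znorm at hz
  have h1 : |(n.1 : ℝ)| ≤ A := (Real.abs_le_sqrt (by nlinarith [sq_nonneg (n.2:ℝ)])).trans hz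
  have h2 : |(n.2 : ℝ)| ≤ A := (Real.abs_le_sqrt (by nlinarith [sq_nonneg (n.1:ℝ)])).trans hz
  exact ⟨by exact_mod_cast h1, by exact_mod_cast h2⟩

lemma dyadic_nat (N : ℝ) (h : IsDyadic N) : ∃ A : ℕ, 1 ≤ A ∧ N = A := by
  obtain ⟨k, rfl⟩ := h
  exact ⟨2 ^ k, Nat.one_le_two_pow, by push_cast; rfl⟩

theorem stmt6 (ε : ℝ) (hε : 0 < ε) :
    ∃ C : ℝ, 0 < C ∧ ∀ N N₁ N₂ N₃ : ℝ,
      IsDyadic N → IsDyadic N₁ → IsDyadic N₂ → IsDyadic N₃ → ∀ m : ℤ, ∀ n₁ : ℤ × ℤ,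
      (({t : (ℤ × ℤ) × (ℤ × ℤ) × (ℤ × ℤ) |
          SMem N N₁ N₂ N₃ m t.1 n₁ t.2.1 t.2.2}).ncard : ℝ) ≤
        C * min (min (N₃ ^ 2 * (min N N₂) ^ ε) ((N * N₂) ^ (1 + ε)))
                (min ((N * N₃) ^ (1 + ε)) ((N₂ * N₃) ^ (1 + ε))) := by
  classical
  obtain ⟨Cc, hCc, hcirc⟩ := circ_bound ε hε
  obtain ⟨Cb, hCb, hbil⟩ := bilin_bound ε hε
  have hC0 : 0 < 9 * Cc + Cb := by linarith
  refine ⟨9 * Cc + Cb, hC0, ?_⟩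
  intro N N₁ N₂ N₃ dN dN₁ dN₂ dN₃ m n₁
  obtain ⟨A, hA, rfl⟩ := dyadic_nat N dN
  obtain ⟨A₂, hA₂, rfl⟩ := dyadic_nat N₂ dN₂
  obtain ⟨A₃, hA₃, rfl⟩ := dyadic_nat N₃ dN₃
  have hA' : (1:ℝ) ≤ A := by exact_mod_cast hA
  have hA₂' : (1:ℝ) ≤ A₂ := by exact_mod_cast hA₂
  set s := {t : (ℤ × ℤ) × (ℤ × ℤ) × (ℤ × ℤ) | SMem A N₁ A₂ A₃ m t.1 n₁ t.2.1 t.2.2} with hs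
  rcases s.finite_or_infinite with hfin | hinf
  swap
  · rw [hinf.ncard]
    simp only [Nat.cast_zero]
    have : (0:ℝ) ≤ min (A:ℝ) A₂ := le_min (by positivity) (by positivity)
    refine mul_nonneg hC0.le (le_min (le_min ?_ ?_) (le_min ?_ ?_)) <;> positivity
  rw [Set.ncard_eq_toFinset_card s hfin]
  set T := hfin.toFinset with hT
  -- unpacked membership facts
  have hmem : ∀ x ∈ T, (x.1.1 = n₁.1 - x.2.1.1 + x.2.2.1 ∧ x.1.2 = n₁.2 - x.2.1.2 + x.2.2.2) ∧
      x.1 ≠ n₁ ∧ x.1 ≠ x.2.2 ∧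
      2 * ((x.1.1 - n₁.1) * (x.1.1 - x.2.2.1) + (x.1.2 - n₁.2) * (x.1.2 - x.2.2.2)) = m ∧
      (|x.1.1| ≤ A ∧ |x.1.2| ≤ A) ∧ (|x.2.1.1| ≤ A₂ ∧ |x.2.1.2| ≤ A₂) ∧
      (|x.2.2.1| ≤ A₃ ∧ |x.2.2.2| ≤ A₃) := by
    rintro ⟨n, n₂, n₃⟩ hx
    rw [hT, Set.Finite.mem_toFinset] at hx
    obtain ⟨h1, h2, h3, h4, h5, _, h6, h7⟩ := hx
    simp only at *
    have e1 : n.1 = n₁.1 - n₂.1 + n₃.1 := by rw [h1]; rfl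
    have e2 : n.2 = n₁.2 - n₂.2 + n₃.2 := by rw [h1]; rfl
    refine ⟨⟨e1, e2⟩, h2, h3, ?_, sim_bound _ _ h5, sim_bound _ _ h6, sim_bound _ _ h7⟩
    rw [← h4]
    unfold phiFn nsq
    rw [e1, e2]
    ring
  have ne_of : ∀ p q : ℤ × ℤ, p ≠ q → ((p.1 - q.1, p.2 - q.2) : ℤ × ℤ) ≠ 0 := by
    intro p q hpq h0
    exact hpq (sub_eq_zero.1 h0)
  have hM : ∀ x ∈ T, ((x.1.1 - n₁.1) * (x.1.1 - x.2.2.1) + (x.1.2 - n₁.2) * (x.1.2 - x.2.2.2)) = m / 2 := by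
    intro x hx
    have := (hmem x hx).2.2.2.1
    omega
  -- the four bounds
  have B1 : (T.card : ℝ) ≤ 9 * Cc * ((A₃:ℝ) ^ 2 * (min (A:ℝ) A₂) ^ ε) := by
    have hfib : ∀ b ∈ ival 0 A₃ ×ˢ ival 0 A₃, ((T.filter (fun x => x.2.2 = b)).card : ℝ) ≤ Cc * (min (A:ℝ) A₂) ^ ε := by
      intro b _
      rcases min_choice (A:ℝ) A₂ with hmin | hmin
      · rw [hmin, ← Finset.card_image_of_injOn (f := fun x : (ℤ × ℤ) × (ℤ × ℤ) × (ℤ × ℤ) => x.1)]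
        · apply hcirc A hA (2 * m + (n₁.1 - b.1) ^ 2 + (n₁.2 - b.2) ^ 2) (n₁.1 + b.1, n₁.2 + b.2)
          intro p hp
          obtain ⟨x, hx, rfl⟩ := Finset.mem_image.1 hp
          obtain ⟨hxT, rfl⟩ := Finset.mem_filter.1 hx
          obtain ⟨⟨e1, e2⟩, _, _, e3, e4, e5, e6⟩ := hmem x hxT
          refine ⟨?_, e4⟩
          rw [← e3]
          simp only
          ring
        · intro x hx y hy hxy
          obtain ⟨hxT, rfl⟩ := Finset.mem_filter.1 hx
          obtain ⟨hy, f⟩ := Finset.mem_filter.1 hy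
          obtain ⟨⟨e1, e2⟩, _⟩ := hmem x hxT
          obtain ⟨⟨e3, e4⟩, _⟩ := hmem y hy
          simp only at hxy
          rw [hxy] at e1 e2
          rw [f] at e3 e4
          exact Prod.ext hxy (Prod.ext (Prod.ext (by linarith) (by linarith)) f.symm)
      · rw [hmin, ← Finset.card_image_of_injOn (f := fun x : (ℤ × ℤ) × (ℤ × ℤ) × (ℤ × ℤ) => x.2.1)]
        · apply hcirc A₂ hA₂ (2 * m + (n₁.1 - b.1) ^ 2 + (n₁.2 - b.2) ^ 2) (n₁.1 + b.1, n₁.2 + b.2)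
          intro p hp
          obtain ⟨x, hx, rfl⟩ := Finset.mem_image.1 hp
          obtain ⟨hxT, rfl⟩ := Finset.mem_filter.1 hx
          obtain ⟨⟨e1, e2⟩, _, _, e3, e4, e5, e6⟩ := hmem x hxT
          refine ⟨?_, e5⟩
          rw [← e3, e1, e2]
          simp only
          ring
        · intro x hx y hy hxy
          obtain ⟨hxT, rfl⟩ := Finset.mem_filter.1 hx
          obtain ⟨hy, f⟩ := Finset.mem_filter.1 hy
          obtain ⟨⟨e1, e2⟩, _⟩ := hmem x hxT
          obtain ⟨⟨e3, e4⟩, _⟩ := hmem y hy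
          simp only at hxy
          rw [hxy] at e1 e2
          rw [f] at e3 e4
          exact Prod.ext (Prod.ext (by linarith) (by linarith)) (Prod.ext hxy f.symm)
    have h1 := card_fiber T (ival 0 A₃ ×ˢ ival 0 A₃) (fun x => x.2.2) (by
      intro x hx
      obtain ⟨_, _, _, _, _, _, e6⟩ := hmem x hx
      rw [Finset.mem_product, mem_ival, mem_ival, sub_zero, sub_zero]
      exact e6) _ hfib
    have h2 := card_ival_prod 0 0 A₃ A₃ hA₃ hA₃
    have h3 : (0:ℝ) ≤ min (A:ℝ) A₂ := le_min (by positivity) (by positivity)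
    calc _ ≤ _ := h1
      _ ≤ 9 * (A₃ * A₃) * (Cc * (min (A:ℝ) A₂) ^ ε) := by gcongr
      _ = _ := by ring
  have B2 : (T.card : ℝ) ≤ Cb * ((A:ℝ) * A₂) ^ (1 + ε) := by
    refine card_inj_bilin (c := (-n₁.1, -n₁.2)) (c' := (n₁.1, n₁.2)) (t := 0) T
      (fun x => ((x.1.1 - n₁.1, x.1.2 - n₁.2), (n₁.1 - x.2.1.1, n₁.2 - x.2.1.2))) ?_
      (hbil A A₂ hA hA₂ (m / 2) _ _ 0 (Or.inl rfl)) ?_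
    · intro x hx y hy hxy
      obtain ⟨⟨e1, e2⟩, _⟩ := hmem x hx
      obtain ⟨⟨e3, e4⟩, _⟩ := hmem y hy
      simp only [Prod.mk.injEq] at hxy
      obtain ⟨⟨f1, f2⟩, f3, f4⟩ := hxy
      refine Prod.ext (Prod.ext ?_ ?_) (Prod.ext (Prod.ext ?_ ?_) (Prod.ext ?_ ?_)) <;> linarith
    · intro x hx
      obtain ⟨⟨e1, e2⟩, h2, h3, _, e4, e5, e6⟩ := hmem x hx
      have g1 : n₁.1 - x.2.1.1 = x.1.1 - x.2.2.1 := by linarith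
      have g2 : n₁.2 - x.2.1.2 = x.1.2 - x.2.2.2 := by linarith
      refine ⟨?_, ne_of _ _ h2, ?_, ?_, ?_, ?_, ?_⟩
      · rw [← hM x hx]; simp only [g1, g2]
      · simp only [g1, g2]; exact ne_of _ _ h3
      · simpa using e4.1
      · simpa using e4.2
      · simpa using e5.1
      · simpa using e5.2
  have B3 : (T.card : ℝ) ≤ Cb * ((A:ℝ) * A₃) ^ (1 + ε) := by
    refine card_inj_bilin (c := (-n₁.1, -n₁.2)) (c' := (n₁.1, n₁.2)) (t := 1) T
      (fun x => ((x.1.1 - n₁.1, x.1.2 - n₁.2), (x.1.1 - x.2.2.1, x.1.2 - x.2.2.2))) ?_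
      (hbil A A₃ hA hA₃ (m / 2) _ _ 1 (Or.inr rfl)) ?_
    · intro x hx y hy hxy
      obtain ⟨⟨e1, e2⟩, _⟩ := hmem x hx
      obtain ⟨⟨e3, e4⟩, _⟩ := hmem y hy
      simp only [Prod.mk.injEq] at hxy
      obtain ⟨⟨f1, f2⟩, f3, f4⟩ := hxy
      refine Prod.ext (Prod.ext ?_ ?_) (Prod.ext (Prod.ext ?_ ?_) (Prod.ext ?_ ?_)) <;> linarith
    · intro x hx
      obtain ⟨⟨e1, e2⟩, h2, h3, _, e4, e5, e6⟩ := hmem x hx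
      refine ⟨hM x hx, ne_of _ _ h2, ne_of _ _ h3, ?_, ?_, ?_, ?_⟩
      · simpa using e4.1
      · simpa using e4.2
      · rw [← abs_neg]; convert e6.1 using 2; ring
      · rw [← abs_neg]; convert e6.2 using 2; ring
  have B4 : (T.card : ℝ) ≤ Cb * ((A₂:ℝ) * A₃) ^ (1 + ε) := by
    refine card_inj_bilin (c := (-n₁.1, -n₁.2)) (c' := (n₁.1, n₁.2)) (t := 1) T
      (fun x => ((x.2.1.1 - n₁.1, x.2.1.2 - n₁.2), (x.2.1.1 - x.2.2.1, x.2.1.2 - x.2.2.2))) ?_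
      (hbil A₂ A₃ hA₂ hA₃ (m / 2) _ _ 1 (Or.inr rfl)) ?_
    · intro x hx y hy hxy
      obtain ⟨⟨e1, e2⟩, _⟩ := hmem x hx
      obtain ⟨⟨e3, e4⟩, _⟩ := hmem y hy
      simp only [Prod.mk.injEq] at hxy
      obtain ⟨⟨f1, f2⟩, f3, f4⟩ := hxy
      refine Prod.ext (Prod.ext ?_ ?_) (Prod.ext (Prod.ext ?_ ?_) (Prod.ext ?_ ?_)) <;> linarith
    · intro x hx
      obtain ⟨⟨e1, e2⟩, h2, h3, _, e4, e5, e6⟩ := hmem x hx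
      refine ⟨?_, ne_of _ _ ?_, ne_of _ _ ?_, ?_, ?_, ?_, ?_⟩
      · rw [← hM x hx, e1, e2]; simp only; ring
      · intro h
        have g1 := congrArg Prod.fst h
        have g2 := congrArg Prod.snd h
        exact h3 (Prod.ext (by linarith) (by linarith))
      · intro h
        have g1 := congrArg Prod.fst h
        have g2 := congrArg Prod.snd h
        exact h2 (Prod.ext (by linarith) (by linarith))
      · simpa using e5.1
      · simpa using e5.2
      · rw [← abs_neg]; convert e6.1 using 2; ring
      · rw [← abs_neg]; convert e6.2 using 2; ring
  have hmono : ∀ (c r : ℝ), 0 ≤ r → c ≤ 9 * Cc + Cb → (T.card : ℝ) ≤ c * r → (T.card : ℝ) ≤ (9 * Cc + Cb) * r :=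
    fun c r hr hc h => h.trans (mul_le_mul_of_nonneg_right hc hr)
  have h3 : (0:ℝ) ≤ min (A:ℝ) A₂ := le_min (by positivity) (by positivity)
  have c1 := hmono _ _ (by positivity) (by linarith) B1
  have c2 := hmono _ _ (by positivity) (by linarith) B2
  have c3 := hmono _ _ (by positivity) (by linarith) B3
  have c4 := hmono _ _ (by positivity) (by linarith) B4
  rw [mul_min_of_nonneg _ _ hC0.le, mul_min_of_nonneg _ _ hC0.le, mul_min_of_nonneg _ _ hC0.le]
  exact le_min (le_min c1 c2) (le_min c3 c4)
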